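/- arXiv:1703.08830 — 3 statements merged into one kernel-verified Lean document; each statement's English description precedes it below -/
import Mathlib

section
/- Let m be a positive integer. For every n ≥ 0, in the ring Γ^(m) we have e_n = ∑_{μ ∈ P(n;m)} d_μ h_μ e_{n−|μ|}, where d_μ = −ε_μ · ∑_{A ∈ W(μ)} (−1)^{len(A)} c_A (and e_0 is interpreted as 1). -/
noncomputable section

open MvPolynomial

/-- The polynomial ring `ℤ[h_1, h_2, …, e_1, e_2, …]`: `Sum.inl i` is `h_i`, `Sum.inr j` is `e_j`. -/
abbrev SymR : Type := MvPolynomial (ℕ ⊕ ℕ) ℤ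

/-- `h_i`, with the convention `h_0 = 1`. -/
def Hh (i : ℕ) : SymR := if i = 0 then 1 else X (Sum.inl i)

/-- `e_j`, with the convention `e_0 = 1`. -/
def Ee (j : ℕ) : SymR := if j = 0 then 1 else X (Sum.inr j)

/-- `∑_{i=0}^d (-1)^i h_i e_{d-i}`. -/
def truncRel (d : ℕ) : SymR := ∑ i ∈ Finset.range (d + 1), (-1 : SymR) ^ i * Hh i * Ee (d - i)

/-- The ideal generated by `∑_{i=0}^d (-1)^i h_i e_{d-i}` for all `d ≥ 1` with `m ∤ d`. -/
def truncIdeal (m : ℕ) : Ideal SymR := Ideal.span {f | ∃ d : ℕ, 0 < d ∧ ¬ m ∣ d ∧ f = truncRel d}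

/-- The `m`'-truncated ring `Γ^(m)`. -/
abbrev Gamma (m : ℕ) := SymR ⧸ truncIdeal m

/-- Quotient map `R → Γ^(m)`. -/
def gmk (m : ℕ) : SymR →+* Gamma m := Ideal.Quotient.mk _

/-- `h_α = h_{α_1} ⋯ h_{α_ℓ}` for a finite sequence `α`. -/
def hprod (l : List ℕ) : SymR := (l.map Hh).prod

/-- `e_α = e_{α_1} ⋯ e_{α_ℓ}` for a finite sequence `α`. -/
def eprod (l : List ℕ) : SymR := (l.map Ee).prod

/-- A partition: a weakly decreasing finite sequence of positive integers. -/
def IsPartitionL (l : List ℕ) : Prop := l.Pairwise (· ≥ ·) ∧ ∀ x ∈ l, 0 < x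

/-- `c_λ`: the number of compositions of type `λ` (distinct rearrangements of `λ`). -/
def numComp (l : List ℕ) : ℕ := l.permutations.dedup.length

/-- `c_λ^(m)`: the number of compositions of type `λ` all of whose partial sums are
not divisible by `m`. -/
def numCompM (m : ℕ) (l : List ℕ) : ℕ :=
  (l.permutations.dedup.filter fun δ => decide (∀ j < δ.length, ¬ m ∣ (δ.take (j + 1)).sum)).length

/-- `ε_λ = (-1)^(|λ|-ℓ(λ))`. -/
def epsL (l : List ℕ) : ℤ := (-1) ^ (l.sum - l.length)

/-- `μ ∈ P(n;m)`: `μ` is a partition with `|μ| ≤ n` and `m ∣ n - |μ|`. -/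
def MemPnm (n m : ℕ) (μ : List ℕ) : Prop := IsPartitionL μ ∧ μ.sum ≤ n ∧ m ∣ (n - μ.sum)

/-- Membership of `A = (δ^(1), …, δ^(r), ξ)` in `W(λ)`: a nonempty finite sequence of
partitions whose parts taken together rearrange to `λ`, and all terms except possibly the
last one are nonempty with size divisible by `m`.  Here `len(A) = A.length = r + 1`. -/
def Wmem (m : ℕ) (lam : List ℕ) (A : List (List ℕ)) : Prop :=
  A ≠ [] ∧ (∀ l ∈ A, IsPartitionL l) ∧ (∀ l ∈ A.dropLast, l ≠ [] ∧ m ∣ l.sum) ∧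
  List.Perm A.flatten lam

/-- `c_A = c_{δ^(1)} ⋯ c_{δ^(r)} ⋅ c_ξ`. -/
def cAprod (A : List (List ℕ)) : ℕ := (A.map numComp).prod

/-- `d_μ = -ε_μ ⋅ ∑_{A ∈ W(μ)} (-1)^{len(A)} c_A`. -/
def dCoef (m : ℕ) (μ : List ℕ) : ℤ :=
  -epsL μ * ∑ᶠ A ∈ {A : List (List ℕ) | Wmem m μ A}, (-1 : ℤ) ^ A.length * (cAprod A : ℤ)


def wt {S : Type*} [CommRing S] (h : ℕ → S) (l : List ℕ) : S :=
  (l.map (fun a => (-1) ^ (a + 1) * h a)).prod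

def compF (j : ℕ) : Finset (List ℕ) := Finset.univ.image (Composition.blocks (n := j))

lemma mem_compF {j : ℕ} {l : List ℕ} : l ∈ compF j ↔ (∀ x ∈ l, 0 < x) ∧ l.sum = j := by
  unfold compF
  simp only [Finset.mem_image, Finset.mem_univ, true_and]
  constructor
  · rintro ⟨c, rfl⟩
    exact ⟨fun x hx => c.blocks_pos hx, c.blocks_sum⟩
  · rintro ⟨h1, h2⟩
    exact ⟨⟨l, fun {i} hi => h1 i hi, h2⟩, rfl⟩

open Classical in
def partF (j : ℕ) : Finset (List ℕ) := (compF j).filter IsPartitionL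

lemma mem_partF {j : ℕ} {l : List ℕ} : l ∈ partF j ↔ IsPartitionL l ∧ l.sum = j := by
  classical
  unfold partF
  rw [Finset.mem_filter, mem_compF]
  unfold IsPartitionL
  tauto

def srt (l : List ℕ) : List ℕ := l.insertionSort (· ≥ ·)

lemma srt_perm (l : List ℕ) : (srt l).Perm l := List.perm_insertionSort _ l

lemma srt_part {l : List ℕ} (h : ∀ x ∈ l, 0 < x) : IsPartitionL (srt l) :=
  ⟨List.pairwise_insertionSort _ l, fun x hx => h x ((srt_perm l).mem_iff.1 hx)⟩

lemma srt_eq_iff {l μ : List ℕ} (hμ : IsPartitionL μ) : srt l = μ ↔ l.Perm μ := by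
  constructor
  · rintro rfl
    exact (srt_perm l).symm
  · intro h
    exact List.Perm.eq_of_pairwise' (List.pairwise_insertionSort _ l) hμ.1 ((srt_perm l).trans h)

lemma wt_perm {S : Type*} [CommRing S] (h : ℕ → S) {l l' : List ℕ} (p : l.Perm l') :
    wt h l = wt h l' := (p.map _).prod_eq

lemma wt_append {S : Type*} [CommRing S] (h : ℕ → S) (l l' : List ℕ) :
    wt h (l ++ l') = wt h l * wt h l' := by simp [wt]

lemma wt_eps {S : Type*} [CommRing S] (h : ℕ → S) (l : List ℕ) (hl : ∀ x ∈ l, 0 < x) :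
    wt h l = (epsL l : S) * (l.map h).prod := by
  have h1 : wt h l = (-1) ^ (l.sum + l.length) * (l.map h).prod := by
    clear hl
    induction l with
    | nil => simp [wt]
    | cons a l ih =>
      have : wt h (a :: l) = (-1) ^ (a + 1) * h a * wt h l := by simp [wt]
      rw [this, ih]
      simp only [List.sum_cons, List.length_cons, List.map_cons, List.prod_cons]
      ring
  have h2 : l.length ≤ l.sum := by
    clear h1
    induction l with
    | nil => simp
    | cons a l ih =>
      have := ih (fun x hx => hl x (by simp [hx]))
      have := hl a (by simp)
      simp
      omega
  rw [h1]
  obtain ⟨k, hk⟩ := Nat.exists_eq_add_of_le h2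
  unfold epsL
  rw [hk]
  push_cast
  congr 1
  rw [Nat.add_sub_cancel_left, show l.length + k + l.length = k + 2 * l.length by ring, pow_add,
    pow_mul]
  simp

def kk {S : Type*} [CommRing S] (h : ℕ → S) (j : ℕ) : S :=
  ∑ l ∈ partF j, (numComp l : S) * wt h l

lemma kk_eq {S : Type*} [CommRing S] (h : ℕ → S) (j : ℕ) : kk h j = ∑ l ∈ compF j, wt h l := by
  classical
  have hm : ∀ l ∈ compF j, srt l ∈ partF j := by
    intro l hl
    rw [mem_compF] at hl
    exact mem_partF.2 ⟨srt_part hl.1, by rw [(srt_perm l).sum_eq, hl.2]⟩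
  rw [← Finset.sum_fiberwise_of_maps_to hm]
  refine Finset.sum_congr rfl fun μ hμ => ?_
  rw [mem_partF] at hμ
  have : ∀ l ∈ (compF j).filter (fun l => srt l = μ), wt h l = wt h μ := by
    intro l hl
    rw [Finset.mem_filter, srt_eq_iff hμ.1] at hl
    exact wt_perm h hl.2
  rw [Finset.sum_congr rfl this, Finset.sum_const, nsmul_eq_mul]
  congr 2
  unfold numComp
  rw [← List.toFinset_card_of_nodup (List.nodup_dedup _)]
  congr 1
  ext l
  rw [Finset.mem_filter, srt_eq_iff hμ.1, mem_compF]
  simp only [List.mem_toFinset, List.mem_dedup, List.mem_permutations]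
  constructor
  · intro hp
    exact ⟨⟨fun x hx => hμ.1.2 x (hp.mem_iff.1 hx), by rw [hp.sum_eq, hμ.2]⟩, hp⟩
  · exact fun h => h.2

lemma kk_zero {S : Type*} [CommRing S] (h : ℕ → S) : kk h 0 = 1 := by
  rw [kk_eq]
  have : compF 0 = {[]} := by
    ext l
    rw [mem_compF, Finset.mem_singleton]
    constructor
    · rintro ⟨h1, h2⟩
      rcases l with _ | ⟨a, l⟩
      · rfl
      · have := h1 a (by simp)
        simp at h2
        omega
    · rintro rfl
      simp
  rw [this]
  simp [wt]

lemma kk_succ {S : Type*} [CommRing S] (h : ℕ → S) (j : ℕ) :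
    kk h (j + 1) = ∑ i ∈ Finset.range (j + 1), (-1) ^ i * h (i + 1) * kk h (j - i) := by
  simp only [kk_eq, Finset.mul_sum]
  rw [Finset.sum_sigma']
  symm
  refine Finset.sum_bij (fun x _ => (x.1 + 1) :: x.2) ?_ ?_ ?_ ?_
  · rintro ⟨i, l⟩ hx
    simp only [Finset.mem_sigma, Finset.mem_range, mem_compF] at hx ⊢
    obtain ⟨h1, h2, h3⟩ := hx
    refine ⟨?_, by simp; omega⟩
    intro x hx
    rcases List.mem_cons.1 hx with rfl | hx
    · omega
    · exact h2 x hx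
  · rintro ⟨i, l⟩ _ ⟨i', l'⟩ _ hh
    simp at hh
    simp [hh]
  · intro l hl
    rw [mem_compF] at hl
    obtain ⟨h1, h2⟩ := hl
    rcases l with _ | ⟨a, l⟩
    · simp at h2
    · have := h1 a (by simp)
      simp at h2
      refine ⟨⟨a - 1, l⟩, ?_, ?_⟩
      · simp only [Finset.mem_sigma, Finset.mem_range, mem_compF]
        exact ⟨by omega, fun x hx => h1 x (by simp [hx]), by omega⟩
      · simp; omega
  · rintro ⟨i, l⟩ _
    simp [wt, pow_succ]

def VA (m : ℕ) (A : List (List ℕ)) : Prop :=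
  A ≠ [] ∧ (∀ l ∈ A, IsPartitionL l) ∧ (∀ l ∈ A.dropLast, l ≠ [] ∧ m ∣ l.sum)

lemma VA_single {m : ℕ} {x : List ℕ} : VA m [x] ↔ IsPartitionL x := by simp [VA]

lemma VA_cons {m : ℕ} {x : List ℕ} {A : List (List ℕ)} (hA : A ≠ []) :
    VA m (x :: A) ↔ (IsPartitionL x ∧ x ≠ [] ∧ m ∣ x.sum) ∧ VA m A := by
  unfold VA
  rw [List.dropLast_cons_of_ne_nil hA]
  simp only [List.mem_cons, forall_eq_or_imp]
  simp [hA]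
  tauto

def WS (m j : ℕ) : Set (List (List ℕ)) := {A | VA m A ∧ A.flatten.sum = j}

lemma part_sum_pos {x : List ℕ} (h : IsPartitionL x) (h0 : x ≠ []) : 0 < x.sum := by
  rcases x with _ | ⟨a, l⟩
  · simp at h0
  · have := h.2 a (by simp)
    simp
    omega

lemma part_ne_nil {x : List ℕ} (h : 0 < x.sum) : x ≠ [] := by
  rintro rfl
  simp at h

lemma WS_finite (m j : ℕ) : (WS m j).Finite := by
  induction j using Nat.strong_induction_on with
  | _ j ih =>
    have h1 : ((partF j).image (fun x => [x]) : Set (List (List ℕ))).Finite := Finset.finite_toSet _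
    have h2 : (⋃ i ∈ Set.Iio j, ⋃ x ∈ (partF (j - i) : Set (List ℕ)),
        (fun A => x :: A) '' (WS m i)).Finite := by
      refine Set.Finite.biUnion (Set.finite_Iio j) fun i hi => ?_
      refine Set.Finite.biUnion (Finset.finite_toSet _) fun x _ => ?_
      exact (ih i hi).image _
    refine (h1.union h2).subset ?_
    rintro A ⟨hA, hs⟩
    rcases A with _ | ⟨x, A⟩
    · exact absurd rfl hA.1
    by_cases h0 : A = []
    · subst h0
      left
      simp only [List.flatten_cons, List.flatten_nil, List.append_nil] at hs
      simp [mem_partF, VA_single.1 hA, hs]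
    · right
      rw [VA_cons h0] at hA
      have := part_sum_pos hA.1.1 hA.1.2.1
      simp only [List.flatten_cons, List.sum_append] at hs
      simp only [Set.mem_iUnion]
      refine ⟨A.flatten.sum, ?_, x, ?_, A, ⟨hA.2, rfl⟩, rfl⟩
      · simp only [Set.mem_Iio]; omega
      · exact Finset.mem_coe.2 (mem_partF.2 ⟨hA.1.1, by omega⟩)

def WF (m j : ℕ) : Finset (List (List ℕ)) := (WS_finite m j).toFinset

lemma mem_WF {m j : ℕ} {A : List (List ℕ)} : A ∈ WF m j ↔ VA m A ∧ A.flatten.sum = j := by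
  unfold WF
  rw [Set.Finite.mem_toFinset]
  rfl

def tA {S : Type*} [CommRing S] (h : ℕ → S) (A : List (List ℕ)) : S :=
  -((-1) ^ A.length * (cAprod A : S) * wt h A.flatten)

def gg {S : Type*} [CommRing S] (h : ℕ → S) (m j : ℕ) : S := ∑ A ∈ WF m j, tA h A

lemma tA_cons {S : Type*} [CommRing S] (h : ℕ → S) (x : List ℕ) (A : List (List ℕ)) :
    tA h (x :: A) = - ((numComp x : S) * wt h x * tA h A) := by
  unfold tA cAprod
  simp only [List.length_cons, List.map_cons, List.prod_cons, List.flatten_cons, wt_append]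
  push_cast
  ring

lemma gg_rec {S : Type*} [CommRing S] (h : ℕ → S) (m j : ℕ) :
    gg h m j = kk h j - ∑ p ∈ (Finset.HasAntidiagonal.antidiagonal j).filter (fun p => 0 < p.1 ∧ m ∣ p.1),
      kk h p.1 * gg h m p.2 := by
  classical
  unfold gg
  rw [← Finset.sum_filter_add_sum_filter_not (WF m j) (fun A => A.length = 1), sub_eq_add_neg]
  congr 1
  · symm
    unfold kk
    refine Finset.sum_bij (fun x _ => [x]) ?_ ?_ ?_ ?_
    · intro x hx
      rw [mem_partF] at hx
      simp [mem_WF, VA_single, hx]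
    · intro a _ b _ hab
      simpa using hab
    · intro A hA
      rw [Finset.mem_filter, mem_WF, List.length_eq_one_iff] at hA
      obtain ⟨⟨h1, h2⟩, x, rfl⟩ := hA
      refine ⟨x, mem_partF.2 ⟨VA_single.1 h1, by simpa using h2⟩, rfl⟩
    · intro x _
      simp [tA, cAprod]
  · rw [← Finset.sum_neg_distrib]
    have hh : ∀ p : ℕ × ℕ, -(kk h p.1 * ∑ A ∈ WF m p.2, tA h A) =
        ∑ q ∈ partF p.1 ×ˢ WF m p.2, tA h (q.1 :: q.2) := by
      intro p
      rw [kk, Finset.sum_mul_sum, Finset.sum_product, ← Finset.sum_neg_distrib]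
      refine Finset.sum_congr rfl fun x _ => ?_
      rw [← Finset.sum_neg_distrib]
      exact Finset.sum_congr rfl fun A _ => (tA_cons h x A).symm
    rw [Finset.sum_congr rfl fun p _ => hh p, Finset.sum_sigma']
    symm
    refine Finset.sum_bij (fun x _ => x.2.1 :: x.2.2) ?_ ?_ ?_ ?_
    · rintro ⟨⟨a, b⟩, x, A⟩ hx
      simp only [Finset.mem_sigma, Finset.mem_filter, Finset.HasAntidiagonal.mem_antidiagonal,
        Finset.mem_product, mem_partF, mem_WF] at hx ⊢
      obtain ⟨⟨h1, h2, h3⟩, ⟨h4, h5⟩, h6, h7⟩ := hx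
      have hA := h6.1
      refine ⟨⟨(VA_cons hA).2 ⟨⟨h4, part_ne_nil (by omega), by rwa [h5]⟩, h6⟩, ?_⟩, ?_⟩
      · rw [List.flatten_cons, List.sum_append]
        omega
      · have := List.length_pos_iff.2 hA
        simp only [List.length_cons]
        omega
    · rintro ⟨⟨a, b⟩, x, A⟩ hx ⟨⟨a', b'⟩, x', A'⟩ hx' he
      simp only [Finset.mem_sigma, Finset.mem_filter, Finset.HasAntidiagonal.mem_antidiagonal,
        Finset.mem_product, mem_partF, mem_WF] at hx hx'
      simp only [List.cons.injEq] at he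
      obtain ⟨rfl, rfl⟩ := he
      obtain ⟨-, ⟨-, rfl⟩, -, rfl⟩ := hx
      obtain ⟨-, ⟨-, rfl⟩, -, rfl⟩ := hx'
      rfl
    · intro A hA
      rw [Finset.mem_filter, mem_WF] at hA
      obtain ⟨⟨h1, h2⟩, h3⟩ := hA
      rcases A with _ | ⟨x, A⟩
      · exact absurd rfl h1.1
      have hA : A ≠ [] := by
        rintro rfl
        simp at h3
      rw [VA_cons hA] at h1
      rw [List.flatten_cons, List.sum_append] at h2
      refine ⟨⟨(x.sum, A.flatten.sum), x, A⟩, ?_, rfl⟩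
      simp only [Finset.mem_sigma, Finset.mem_filter, Finset.HasAntidiagonal.mem_antidiagonal,
        Finset.mem_product, mem_partF, mem_WF]
      exact ⟨⟨h2, part_sum_pos h1.1.1 h1.1.2.1, h1.1.2.2⟩, ⟨h1.1.1, trivial⟩, h1.2, trivial⟩
    · intro x _
      rfl

lemma hk_mul {S : Type*} [CommRing S] (h : ℕ → S) (h0 : h 0 = 1) :
    PowerSeries.mk (fun i => (-1) ^ i * h i) * PowerSeries.mk (kk h) = 1 := by
  ext n
  rw [PowerSeries.coeff_mul, PowerSeries.coeff_one]
  simp only [PowerSeries.coeff_mk]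
  rcases n with _ | n
  · simp [h0, kk_zero]
  · rw [Finset.Nat.sum_antidiagonal_succ, kk_succ]
    rw [Finset.Nat.sum_antidiagonal_eq_sum_range_succ_mk]
    simp only [h0, pow_succ]
    simp

lemma k0g {S : Type*} [CommRing S] (h : ℕ → S) (m : ℕ) :
    PowerSeries.mk (fun i => if m ∣ i then kk h i else 0) * PowerSeries.mk (gg h m) =
      PowerSeries.mk (kk h) := by
  ext n
  rw [PowerSeries.coeff_mul]
  simp only [PowerSeries.coeff_mk]
  have h1 := gg_rec h m n
  have h2 : (0, n) ∈ Finset.HasAntidiagonal.antidiagonal n := by simp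
  rw [← Finset.add_sum_erase _ _ h2]
  rw [sub_eq_iff_eq_add.1 h1.symm]
  simp only [dvd_zero, if_true, kk_zero, one_mul]
  congr 1
  rw [Finset.sum_filter]
  rw [← Finset.add_sum_erase _ _ h2]
  simp only [lt_irrefl, false_and, if_false, zero_add]
  refine Finset.sum_congr rfl ?_
  rintro ⟨a, b⟩ hab
  simp only [Finset.mem_erase, Finset.HasAntidiagonal.mem_antidiagonal, ne_eq, Prod.mk.injEq] at hab
  have : 0 < a := by omega
  simp [this]

lemma main_ps {S : Type*} [CommRing S] (h e : ℕ → S) (m : ℕ) (h0 : h 0 = 1)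
    (hr : ∀ d, ¬ m ∣ d → ∑ p ∈ Finset.HasAntidiagonal.antidiagonal d, (-1) ^ p.1 * h p.1 * e p.2 = 0) (n : ℕ) :
    e n = ∑ p ∈ Finset.HasAntidiagonal.antidiagonal n, gg h m p.1 * (if m ∣ p.2 then e p.2 else 0) := by
  set Hm := PowerSeries.mk (fun i => (-1) ^ i * h i) with hHm
  set K := PowerSeries.mk (kk h) with hK
  set K0 := PowerSeries.mk (fun i => if m ∣ i then kk h i else 0) with hK0
  set G := PowerSeries.mk (gg h m) with hG
  set E := PowerSeries.mk e with hE
  set E0 := PowerSeries.mk (fun i => if m ∣ i then e i else 0) with hE0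
  have e1 : Hm * K = 1 := hk_mul h h0
  have e2 : K0 * G = K := k0g h m
  have hF : ∀ d, ¬ m ∣ d → PowerSeries.coeff d (Hm * E) = 0 := by
    intro d hd
    rw [PowerSeries.coeff_mul]
    simpa [hHm, hE] using hr d hd
  have e3 : (Hm * E) * K = E := by
    calc (Hm * E) * K = (Hm * K) * E := by ring
      _ = E := by rw [e1, one_mul]
  have e4 : (Hm * E) * K0 = E0 := by
    ext d
    have h3 := congrArg (PowerSeries.coeff d) e3
    rw [PowerSeries.coeff_mul] at h3 ⊢
    simp only [hK, hE, hK0, hE0, PowerSeries.coeff_mk] at h3 ⊢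
    split_ifs with hd
    · rw [← h3]
      refine Finset.sum_congr rfl ?_
      rintro ⟨a, b⟩ hab
      rw [Finset.HasAntidiagonal.mem_antidiagonal] at hab
      by_cases ha : m ∣ a
      · have : m ∣ b := (Nat.dvd_add_right ha).1 (by simpa [hab] using hd)
        simp [this]
      · have := hF a ha
        simp only [hE] at this
        simp [this]
    · refine Finset.sum_eq_zero ?_
      rintro ⟨a, b⟩ hab
      rw [Finset.HasAntidiagonal.mem_antidiagonal] at hab
      by_cases ha : m ∣ a
      · have : ¬ m ∣ b := fun hb => hd (hab ▸ dvd_add ha hb)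
        simp [this]
      · have := hF a ha
        simp only [hE] at this
        simp [this]
  have e5 : E = G * E0 := by
    calc E = (Hm * E) * K := e3.symm
      _ = G * ((Hm * E) * K0) := by rw [← e2]; ring
      _ = G * E0 := by rw [e4]
  have := congrArg (PowerSeries.coeff n) e5
  rw [PowerSeries.coeff_mul] at this
  simpa [hE, hG, hE0] using this

lemma gg_eq {S : Type*} [CommRing S] (h : ℕ → S) (m j : ℕ) :
    gg h m j = ∑ μ ∈ partF j, (dCoef m μ : S) * (μ.map h).prod := by
  classical
  have hm : ∀ A ∈ WF m j, srt A.flatten ∈ partF j := by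
    intro A hA
    rw [mem_WF] at hA
    refine mem_partF.2 ⟨srt_part ?_, by rw [(srt_perm _).sum_eq, hA.2]⟩
    intro x hx
    obtain ⟨l, hl, hx⟩ := List.mem_flatten.1 hx
    exact (hA.1.2.1 l hl).2 x hx
  unfold gg
  rw [← Finset.sum_fiberwise_of_maps_to hm]
  refine Finset.sum_congr rfl fun μ hμ => ?_
  rw [mem_partF] at hμ
  have hset : {A : List (List ℕ) | Wmem m μ A} =
      ((WF m j).filter (fun A => srt A.flatten = μ) : Finset _) := by
    ext A
    simp only [Set.mem_ofPred_eq, Finset.coe_filter, mem_WF, srt_eq_iff hμ.1, VA, Wmem]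
    constructor
    · rintro ⟨a, b, c, d⟩
      exact ⟨⟨⟨a, b, c⟩, by rw [d.sum_eq, hμ.2]⟩, d⟩
    · rintro ⟨⟨⟨a, b, c⟩, _⟩, d⟩
      exact ⟨a, b, c, d⟩
  unfold dCoef
  rw [hset, finsum_mem_coe_finset]
  push_cast
  rw [Finset.mul_sum, Finset.sum_mul]
  refine Finset.sum_congr rfl fun A hA => ?_
  rw [Finset.mem_filter, srt_eq_iff hμ.1] at hA
  unfold tA
  rw [wt_perm h hA.2, wt_eps h μ hμ.1.2]
  ring

theorem stmt5 {m : ℕ} (hm : 0 < m) (n : ℕ) :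
    gmk m (Ee n) =
      ∑ᶠ μ ∈ {μ : List ℕ | MemPnm n m μ}, dCoef m μ • gmk m (hprod μ * Ee (n - μ.sum)) := by
  classical
  have key := main_ps (fun i => gmk m (Hh i)) (fun i => gmk m (Ee i)) m (by simp [Hh]) (by
    intro d hd
    have hd0 : 0 < d := by
      rcases Nat.eq_zero_or_pos d with rfl | h
      · simp at hd
      · exact h
    have : gmk m (truncRel d) = 0 :=
      Ideal.Quotient.eq_zero_iff_mem.2 (Ideal.subset_span ⟨d, hd0, hd, rfl⟩)
    rw [← this, truncRel, map_sum, Finset.Nat.sum_antidiagonal_eq_sum_range_succ_mk]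
    simp) n
  have hset : {μ : List ℕ | MemPnm n m μ} =
      (((Finset.range (n + 1)).biUnion partF).filter (fun μ => m ∣ n - μ.sum) : Finset _) := by
    ext μ
    simp only [Set.mem_ofPred_eq, MemPnm, Finset.coe_filter, Finset.mem_biUnion, Finset.mem_range,
      mem_partF]
    constructor
    · rintro ⟨a, b, c⟩
      exact ⟨⟨μ.sum, by omega, a, rfl⟩, c⟩
    · rintro ⟨⟨i, hi, a, rfl⟩, c⟩
      exact ⟨a, by omega, c⟩
  rw [hset, finsum_mem_coe_finset, Finset.sum_filter, Finset.sum_biUnion]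
  · rw [key, Finset.Nat.sum_antidiagonal_eq_sum_range_succ_mk]
    refine Finset.sum_congr rfl fun i hi => ?_
    dsimp only
    rw [gg_eq, Finset.sum_mul]
    refine Finset.sum_congr rfl fun μ hμ => ?_
    rw [(mem_partF.1 hμ).2]
    split_ifs
    · rw [zsmul_eq_mul, map_mul, hprod, map_list_prod, List.map_map, mul_assoc]
      rfl
    · simp
  · intro i _ j _ hij
    rw [Function.onFun, Finset.disjoint_left]
    intro μ h1 h2
    exact hij ((mem_partF.1 h1).2.symm.trans (mem_partF.1 h2).2)
end
end

section
/- Let m be a positive integer and λ a partition. Then c_λ^(m) = ∑_{A ∈ W(λ)} (−1)^{len(A)+1} c_A. -/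
noncomputable section

def VV (m : ℕ) (B : List (List ℕ)) : Prop :=
  B ≠ [] ∧ ∀ l ∈ B.dropLast, l ≠ [] ∧ m ∣ l.sum

lemma VV_one (m : ℕ) (b : List ℕ) : VV m [b] := by simp [VV]

lemma VV_cons (m : ℕ) (b c : List ℕ) (R : List (List ℕ)) :
    VV m (b :: c :: R) ↔ (b ≠ [] ∧ m ∣ b.sum) ∧ VV m (c :: R) := by
  simp [VV]

lemma VV_length (m : ℕ) : ∀ B : List (List ℕ), VV m B → B.length ≤ B.flatten.length + 1
  | [], h => by simp
  | [b], h => by simp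
  | b :: c :: R, h => by
    have h' := (VV_cons m b c R).1 h
    have ih := VV_length m (c :: R) h'.2
    have : 0 < b.length := List.length_pos_iff.2 h'.1.1
    simp at ih ⊢
    omega

lemma fin_lists {α : Type*} (s : Set α) (hs : s.Finite) (n : ℕ) :
    {l : List α | (∀ x ∈ l, x ∈ s) ∧ l.length ≤ n}.Finite := by
  induction n with
  | zero =>
    refine (Set.finite_singleton ([] : List α)).subset ?_
    rintro l ⟨_, h⟩
    simpa using h
  | succ n ih =>
    refine ((Set.finite_singleton ([] : List α)).union (Set.Finite.image2 List.cons hs ih)).subset ?_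
    rintro l ⟨h1, h2⟩
    cases l with
    | nil => left; rfl
    | cons a l =>
      right
      refine ⟨a, h1 a (by simp), l, ⟨fun x hx => h1 x (by simp [hx]), by simpa using h2⟩, rfl⟩

lemma fin_VV (m : ℕ) (lam : List ℕ) :
    {B : List (List ℕ) | VV m B ∧ List.Perm B.flatten lam}.Finite := by
  have h1 := fin_lists {x | x ∈ lam} (List.finite_toSet lam) lam.length
  refine (fin_lists _ h1 (lam.length + 1)).subset ?_
  rintro B ⟨hV, hp⟩
  refine ⟨fun b hb => ⟨fun x hx => ?_, ?_⟩, ?_⟩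
  · exact hp.subset (List.mem_flatten.2 ⟨b, hb, hx⟩)
  · rw [← hp.length_eq]
    exact (List.sublist_flatten_of_mem hb).length_le
  · rw [← hp.length_eq]
    exact VV_length m B hV

def inv7 (p : ℕ) : List (List ℕ) → List (List ℕ)
  | [] => []
  | [b] => [b.take p, b.drop p]
  | b :: c :: R => if b.length = p then (b ++ c) :: R else b.take p :: b.drop p :: c :: R

lemma take_div (m : ℕ) (d b : List ℕ) (p : ℕ) (hm : ∀ q, 0 < q → q < p → ¬ m ∣ (d.take q).sum)
    (e : List ℕ) (hd : b ++ e = d) (hb : b ≠ []) (hs : m ∣ b.sum) : p ≤ b.length := by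
  by_contra h
  refine hm b.length (List.length_pos_iff.2 hb) (by omega) ?_
  rw [← hd]; simpa using hs

lemma inv7_spec (m : ℕ) (d : List ℕ) (p : ℕ) (hp : 0 < p) (hpl : p ≤ d.length)
    (hpd : m ∣ (d.take p).sum) (hm : ∀ q, 0 < q → q < p → ¬ m ∣ (d.take q).sum)
    (B : List (List ℕ)) (hV : VV m B) (hf : B.flatten = d) :
    VV m (inv7 p B) ∧ (inv7 p B).flatten = d ∧ inv7 p (inv7 p B) = B ∧
      (-1 : ℤ) ^ (B.length + 1) + (-1) ^ ((inv7 p B).length + 1) = 0 ∧ inv7 p B ≠ B := by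
  match B, hV, hf with
  | [], hV, _ => exact absurd rfl hV.1
  | [b], hV, hf =>
    have hb : b = d := by simpa using hf
    subst hb
    refine ⟨?_, ?_, ?_, ?_, ?_⟩
    · refine (VV_cons _ _ _ _).2 ⟨⟨?_, hpd⟩, VV_one _ _⟩
      intro h
      have := congrArg List.length h
      simp at this
      rcases this with h | h
      · omega
      · subst h; simp at hpl; omega
    · simp [inv7]
    · simp [inv7, hpl]
    · simp [inv7]
    · simp [inv7]
  | b :: c :: R, hV, hf =>
    obtain ⟨⟨hb, hbs⟩, hV'⟩ := (VV_cons _ _ _ _).1 hV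
    have hle : p ≤ b.length := take_div m d b p hm (c :: R).flatten (by simpa using hf) hb hbs
    by_cases h : b.length = p
    · have e1 : inv7 p (b :: c :: R) = (b ++ c) :: R := by simp [inv7, h]
      rw [e1]
      refine ⟨?_, ?_, ?_, ?_, ?_⟩
      · cases R with
        | nil => exact VV_one _ _
        | cons r R =>
          obtain ⟨⟨hc, hcs⟩, hV''⟩ := (VV_cons _ _ _ _).1 hV'
          refine (VV_cons _ _ _ _).2 ⟨⟨by simp [hb], ?_⟩, hV''⟩
          rw [List.sum_append]; exact dvd_add hbs hcs
      · simpa using hf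
      · subst h
        cases R with
        | nil => simp [inv7]
        | cons r R =>
          obtain ⟨⟨hc, hcs⟩, hV''⟩ := (VV_cons _ _ _ _).1 hV'
          simp [inv7, hc]
      · simp [pow_succ]
      · intro h; have := congrArg List.length h; simp at this
    · have e1 : inv7 p (b :: c :: R) = b.take p :: b.drop p :: c :: R := by simp [inv7, h]
      have hlt : p < b.length := by omega
      have ht : b.take p = d.take p := by
        rw [← hf]; simp [List.take_append_of_le_length hle]
      rw [e1]
      have hd1 : m ∣ (b.take p).sum := ht ▸ hpd
      refine ⟨?_, ?_, ?_, ?_, ?_⟩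
      · refine (VV_cons _ _ _ _).2 ⟨⟨?_, hd1⟩, (VV_cons _ _ _ _).2 ⟨⟨?_, ?_⟩, hV'⟩⟩
        · simp [hb]; omega
        · simp; omega
        · have := List.sum_take_add_sum_drop b p
          rw [← this] at hbs
          exact (Nat.dvd_add_right hd1).1 hbs
      · rw [← hf]; simp [← List.append_assoc]
      · simp [inv7, hle]
      · simp [pow_succ]
      · intro h; have := congrArg List.length h; simp at this

open Classical in
lemma sum_flat (m : ℕ) (d : List ℕ) (S : Finset (List (List ℕ)))
    (hS : ∀ B, B ∈ S ↔ VV m B ∧ B.flatten = d) :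
    ∑ B ∈ S, (-1 : ℤ) ^ (B.length + 1) =
      if (∀ j < d.length, ¬ m ∣ (d.take (j + 1)).sum) then 1 else 0 := by
  split_ifs with h
  · have : S = {[d]} := by
      ext B
      rw [hS, Finset.mem_singleton]
      constructor
      · rintro ⟨hV, hf⟩
        match B, hV, hf with
        | [], hV, _ => exact absurd rfl hV.1
        | [b], hV, hf => simpa using hf
        | b :: c :: R, hV, hf =>
          exfalso
          obtain ⟨⟨hb, hbs⟩, hV'⟩ := (VV_cons _ _ _ _).1 hV
          have hpos := List.length_pos_iff.2 hb
          refine h (b.length - 1) ?_ ?_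
          · rw [← hf]; simp; omega
          · rw [Nat.sub_add_cancel hpos, ← hf]; simpa using hbs
      · rintro rfl; exact ⟨VV_one _ _, by simp⟩
    rw [this]; simp
  · push Not at h
    have hex : ∃ p, 0 < p ∧ p ≤ d.length ∧ m ∣ (d.take p).sum := by
      obtain ⟨j, hj, hd⟩ := h
      exact ⟨j + 1, by omega, hj, hd⟩
    obtain ⟨hp, hpl, hpd⟩ := Nat.find_spec hex
    have hmin : ∀ q, 0 < q → q < Nat.find hex → ¬ m ∣ (d.take q).sum := by
      intro q h0 hq hd
      exact Nat.find_min hex hq ⟨h0, by omega, hd⟩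
    generalize Nat.find hex = p at *
    have key := fun B hB => inv7_spec m d p hp hpl hpd hmin B ((hS B).1 hB).1 ((hS B).1 hB).2
    refine Finset.sum_involution (fun B _ => inv7 p B) (fun B hB => (key B hB).2.2.2.1)
      (fun B hB _ => (key B hB).2.2.2.2) (fun B hB => (hS _).2 ⟨(key B hB).1, (key B hB).2.1⟩)
      (fun B hB => (key B hB).2.2.1)

def PP : List (List ℕ) → Finset (List (List ℕ))
  | [] => {[]}
  | a :: A => Finset.image₂ List.cons a.permutations.toFinset (PP A)

lemma card_PP (A : List (List ℕ)) : (PP A).card = cAprod A := by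
  induction A with
  | nil => simp [PP, cAprod]
  | cons a A ih =>
    rw [PP, Finset.card_image₂ (by intro x y h; simpa using h), ih]
    simp [cAprod, numComp, List.card_toFinset]

lemma mem_PP (A B : List (List ℕ)) : B ∈ PP A ↔ List.Forall₂ List.Perm B A := by
  induction A generalizing B with
  | nil => simp [PP]
  | cons a A ih =>
    cases B with
    | nil => simp [PP, Finset.mem_image₂]
    | cons b B => simp [PP, Finset.mem_image₂, ih]

lemma forall2_sort (A : List (List ℕ)) (hA : ∀ l ∈ A, IsPartitionL l) (B : List (List ℕ)) :
    B.map (List.insertionSort (· ≥ ·)) = A ↔ List.Forall₂ List.Perm B A := by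
  induction A generalizing B with
  | nil => simp
  | cons a A ih =>
    cases B with
    | nil => simp
    | cons b B =>
      rw [List.map_cons, List.cons.injEq, List.forall₂_cons, ih (fun l hl => hA l (by simp [hl]))]
      refine and_congr_left fun _ => ⟨fun h => h ▸ (List.perm_insertionSort _ b).symm, fun h => ?_⟩
      exact List.Perm.eq_of_pairwise' (List.pairwise_insertionSort _ b) (hA a (by simp)).1
        ((List.perm_insertionSort _ b).trans h)

lemma forall2_VV (m : ℕ) (A B : List (List ℕ)) (h : List.Forall₂ List.Perm B A) :
    VV m B ↔ VV m A := by
  induction h with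
  | nil => rfl
  | cons h1 h2 ih =>
    cases h2 with
    | nil => simp [VV_one]
    | cons h3 h4 =>
      rw [VV_cons, VV_cons, ih, h1.sum_eq]
      simp only [ne_eq, ← List.length_eq_zero_iff, h1.length_eq]

lemma forall2_flatten (A B : List (List ℕ)) (h : List.Forall₂ List.Perm B A) :
    List.Perm B.flatten A.flatten := by
  induction h with
  | nil => simp
  | cons h1 h2 ih => simpa using h1.append ih

theorem stmt7 {m : ℕ} (hm : 0 < m) (lam : List ℕ) (hlam : IsPartitionL lam) :
    (numCompM m lam : ℤ) =
      ∑ᶠ A ∈ {A : List (List ℕ) | Wmem m lam A},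
        (-1 : ℤ) ^ (A.length + 1) * (cAprod A : ℤ) := by
  classical
  have hWf : {A : List (List ℕ) | Wmem m lam A}.Finite :=
    (fin_VV m lam).subset fun A h => ⟨⟨h.1, h.2.2.1⟩, h.2.2.2⟩
  have hVf := fin_VV m lam
  rw [finsum_mem_eq_finite_toFinset_sum _ hWf]
  have step1 : ∑ A ∈ hWf.toFinset, (-1 : ℤ) ^ (A.length + 1) * (cAprod A : ℤ) =
      ∑ B ∈ hVf.toFinset, (-1 : ℤ) ^ (B.length + 1) := by
    rw [← Finset.sum_fiberwise_of_maps_to (s := hVf.toFinset) (t := hWf.toFinset)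
      (g := List.map (List.insertionSort (· ≥ ·)))]
    · refine Finset.sum_congr rfl fun A hA => ?_
      have hA' : Wmem m lam A := by simpa using hA
      have : {B ∈ hVf.toFinset | B.map (List.insertionSort (· ≥ ·)) = A} = PP A := by
        ext B
        rw [Finset.mem_filter, forall2_sort A hA'.2.1, mem_PP]
        simp only [Set.Finite.mem_toFinset, Set.mem_setOf_eq]
        refine ⟨fun h => h.2, fun h => ⟨⟨(forall2_VV m A B h).2 ⟨hA'.1, hA'.2.2.1⟩,
          (forall2_flatten A B h).trans hA'.2.2.2⟩, h⟩⟩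
      rw [this, ← card_PP, Finset.sum_congr rfl (g := fun _ => (-1 : ℤ) ^ (A.length + 1))]
      · simp [mul_comm]
      · intro B hB
        rw [((mem_PP A B).1 hB).length_eq]
    · intro B hB
      have hB' : VV m B ∧ List.Perm B.flatten lam := by simpa using hB
      have hF : List.Forall₂ List.Perm B (B.map (List.insertionSort (· ≥ ·))) := by
        rw [List.forall₂_map_right_iff, List.forall₂_same]
        exact fun b _ => (List.perm_insertionSort _ b).symm
      have h1 := (forall2_VV m _ _ hF).1 hB'.1
      have h2 := (forall2_flatten _ _ hF).symm.trans hB'.2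
      rw [Set.Finite.mem_toFinset]
      refine ⟨h1.1, fun l hl => ⟨?_, fun x hx => ?_⟩, h1.2, h2⟩
      · obtain ⟨b, _, rfl⟩ := List.mem_map.1 hl
        exact List.pairwise_insertionSort _ b
      · exact hlam.2 x (h2.subset (List.mem_flatten.2 ⟨l, hl, hx⟩))
  rw [step1, ← Finset.sum_fiberwise_of_maps_to (s := hVf.toFinset)
    (t := lam.permutations.toFinset) (g := List.flatten)]
  · rw [Finset.sum_congr rfl (fun d hd => sum_flat m d _ ?_)]
    · rw [Finset.sum_boole, numCompM, ← List.toFinset_card_of_nodup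
        ((List.nodup_dedup _).filter _)]
      congr 2
      ext d
      simp
    · intro B
      rw [Finset.mem_filter, Set.Finite.mem_toFinset]
      have hd' : List.Perm d lam := by simpa using hd
      refine ⟨fun h => ⟨h.1.1, h.2⟩, fun h => ⟨⟨h.1, h.2 ▸ hd'⟩, h.2⟩⟩
  · intro B hB
    have hB' : VV m B ∧ List.Perm B.flatten lam := by simpa using hB
    simpa using hB'.2
end
end

section
/- Let m be a positive integer and (α|β) a pair of compositions with |α| + |β| = n. Write β_i = mη_i + r_i with 0 ≤ r_i ≤ m−1, let r = r_1 + ··· + r_{ℓ(β)}, let λ = α∪(1^r), and let μ be the partition obtained by arranging the nonzero values among the η_i in weakly decreasing order. Suppose ξ and θ are partitions with |α| + |ξ| + m|θ| = n such that c^(m)_{β;(ξ,mθ)} ≠ 0 and (λ|mμ) ⊵ (α∪ξ|mθ). Then α∪ξ = λ and θ = μ. -/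
noncomputable section

/-- Membership of the tuple `L = (ξ^(1), …, ξ^(s))` in `V(β;(ξ,mμ))`. -/
def Vmem (m : ℕ) (β ξ μ : List ℕ) (L : List (List ℕ)) : Prop :=
  L.length = β.length ∧
  (∀ i < β.length, MemPnm (β.getD i 0) m (L.getD i [])) ∧
  List.Perm L.flatten ξ ∧
  List.Perm (((List.range β.length).map fun i => β.getD i 0 - (L.getD i []).sum).filter
      fun x => decide (x ≠ 0)) (μ.map (m * ·))

/-- `c^(m)_{β;(ξ,mμ)} = ∑_{(ξ^(1),…,ξ^(s)) ∈ V(β;(ξ,mμ))} ∏_i ε_{ξ^(i)} c^(m)_{ξ^(i)}`. -/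
def cB (m : ℕ) (β ξ μ : List ℕ) : ℤ :=
  ∑ᶠ L ∈ {L : List (List ℕ) | Vmem m β ξ μ L},
    ∏ i ∈ Finset.range β.length, epsL (L.getD i []) * (numCompM m (L.getD i []) : ℤ)

/-- Dominance order on pairs: `(lam | m·mu) ⊵ (del | m·th)`, i.e. for every `l ≥ 1`,
`∑_{i=1}^l lam_i ≥ ∑_{i=1}^l del_i` and
`|lam| + m·∑_{i=1}^l mu_i ≥ |del| + m·∑_{i=1}^l th_i`. -/
def Dominates (m : ℕ) (lam mu del th : List ℕ) : Prop :=
  ∀ l, 1 ≤ l →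
    (del.take l).sum ≤ (lam.take l).sum ∧
    del.sum + m * (th.take l).sum ≤ lam.sum + m * (mu.take l).sum

theorem aux_map {γ δ : Type} (f : γ → δ) (d : γ) (l : List γ) :
    l.map f = (List.range l.length).map fun i => f (l.getD i d) := by
  apply List.ext_getElem
  · simp
  · intro i h1 h2
    simp only [List.length_map] at h1
    simp [List.getD_eq_getElem, h1]

theorem aux_sum {γ : Type} (f : γ → ℕ) (d : γ) (l : List γ) :
    (l.map f).sum = ∑ i ∈ Finset.range l.length, f (l.getD i d) := by
  induction l with
  | nil => simp
  | cons a t ih =>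
    rw [List.length_cons, Finset.sum_range_succ']
    simp [ih, add_comm]

theorem aux_len (l : List ℕ) (h : ∀ x ∈ l, 0 < x) : l.length ≤ l.sum := by
  induction l with
  | nil => simp
  | cons a t ih =>
    have h1 := h a (by simp)
    have h2 := ih (fun x hx => h x (by simp [hx]))
    simp only [List.length_cons, List.sum_cons]
    omega

theorem aux_ones (l : List ℕ) (h : ∀ x ∈ l, 0 < x) (hs : l.sum ≤ l.length) :
    l = List.replicate l.length 1 := by
  induction l with
  | nil => simp
  | cons a t ih =>
    have h1 := h a (by simp)
    have h3 := aux_len t (fun x hx => h x (by simp [hx]))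
    simp only [List.length_cons, List.sum_cons] at hs
    have h2 := ih (fun x hx => h x (by simp [hx])) (by omega)
    have ha : a = 1 := by omega
    rw [List.length_cons, List.replicate_succ, ← h2, ha]

theorem aux_sorted (l l' : List ℕ) (h : l.Pairwise (· ≥ ·)) (h' : l'.Pairwise (· ≥ ·))
    (hp : l.Perm l') : l = l' :=
  hp.eq_of_pairwise (fun a b _ _ h1 h2 => le_antisymm h2 h1) h h'

theorem stmt10 {m : ℕ} (hm : 0 < m) {n : ℕ} (α β : List ℕ)
    (hα : ∀ x ∈ α, 0 < x) (hβ : ∀ x ∈ β, 0 < x) (hn : α.sum + β.sum = n)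
    (r : ℕ) (hr : r = (β.map (· % m)).sum)
    (lam : List ℕ) (hlams : lam.Pairwise (· ≥ ·))
    (hlam : List.Perm lam (α ++ List.replicate r 1))
    (mu : List ℕ) (hmus : mu.Pairwise (· ≥ ·))
    (hmu : List.Perm mu ((β.map (· / m)).filter fun x => decide (x ≠ 0)))
    (ξ θ : List ℕ) (hξ : IsPartitionL ξ) (hθ : IsPartitionL θ)
    (hsum : α.sum + ξ.sum + m * θ.sum = n)
    (hc : cB m β ξ θ ≠ 0)
    (αξ : List ℕ) (hαξs : αξ.Pairwise (· ≥ ·)) (hαξ : List.Perm αξ (α ++ ξ))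
    (hdom : Dominates m lam mu αξ θ) :
    αξ = lam ∧ θ = mu := by
  obtain ⟨L, hL⟩ : ∃ L, Vmem m β ξ θ L := by
    by_contra hne
    push Not at hne
    apply hc
    unfold cB
    apply finsum_mem_eq_zero_of_forall_eq_zero
    intro L hL
    exact absurd hL (hne L)
  obtain ⟨hlen, hP, hfl, hθp⟩ := hL
  have hge : ∀ i ∈ Finset.range β.length, β.getD i 0 % m ≤ (L.getD i []).sum := by
    intro i hi
    obtain ⟨-, h1, h2⟩ := hP i (Finset.mem_range.1 hi)
    have : (L.getD i []).sum ≡ β.getD i 0 [MOD m] := (Nat.modEq_iff_dvd' h1).2 h2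
    rw [← this]
    exact Nat.mod_le _ _
  have hξsum : ξ.sum = ∑ i ∈ Finset.range β.length, (L.getD i []).sum := by
    rw [← hfl.sum_eq, List.sum_flatten, aux_sum List.sum [] L, hlen]
  have hrsum : r = ∑ i ∈ Finset.range β.length, β.getD i 0 % m := by
    rw [hr, aux_sum (· % m) 0 β]
  have hsl : lam.sum = α.sum + r := by rw [hlam.sum_eq]; simp
  have hsa : αξ.sum = α.sum + ξ.sum := by rw [hαξ.sum_eq]; simp
  have hle : ξ.sum ≤ r := by
    have := (hdom (αξ.length + lam.length + 1) (by omega)).1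
    rw [List.take_of_length_le (by omega), List.take_of_length_le (by omega)] at this
    omega
  have hge' : r ≤ ξ.sum := by
    rw [hrsum, hξsum]; exact Finset.sum_le_sum hge
  have heq : ξ.sum = r := le_antisymm hle hge'
  have hi : ∀ i ∈ Finset.range β.length, β.getD i 0 % m = (L.getD i []).sum :=
    (Finset.sum_eq_sum_iff_of_le hge).1 (by rw [← hrsum, ← hξsum, heq])
  have hlampos : ∀ x ∈ lam, 0 < x := by
    intro x hx
    rcases List.mem_append.1 (hlam.subset hx) with h | h
    · exact hα x h
    · rw [List.eq_of_mem_replicate h]; exact one_pos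
  constructor
  · have hll : lam.length ≤ αξ.length := by
      by_cases h0 : αξ.length = 0
      · have h1 := aux_len lam hlampos
        rw [List.length_eq_zero_iff] at h0
        rw [h0] at hsa
        simp at hsa
        omega
      · have h1 := (hdom αξ.length (by omega)).1
        rw [List.take_of_length_le le_rfl] at h1
        have h2 : (lam.take αξ.length).sum + (lam.drop αξ.length).sum = lam.sum :=
          List.sum_take_add_sum_drop _ _
        have h3 := aux_len (lam.drop αξ.length) (fun x hx => hlampos x (List.mem_of_mem_drop hx))
        rw [List.length_drop] at h3
        omega
    rw [hlam.length_eq, hαξ.length_eq] at hll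
    simp only [List.length_append, List.length_replicate] at hll
    have h4 := aux_len ξ hξ.2
    have h5 := aux_ones ξ hξ.2 (by omega)
    have h6 : ξ.length = r := by omega
    rw [h6] at h5
    apply aux_sorted _ _ hαξs hlams
    rw [h5] at hαξ
    exact hαξ.trans hlam.symm
  · apply aux_sorted _ _ hθ.1 hmus
    refine List.Perm.trans ?_ hmu.symm
    have hinj : Function.Injective (fun x : ℕ => m * x) :=
      fun a b h => Nat.eq_of_mul_eq_mul_left hm h
    apply (List.map_perm_map_iff hinj).1
    refine hθp.symm.trans (List.Perm.of_eq ?_)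
    rw [aux_map (· / m) 0 β]
    have h7 : ((List.range β.length).map fun i => β.getD i 0 - (L.getD i []).sum) =
        ((List.range β.length).map fun i => β.getD i 0 / m).map (m * ·) := by
      rw [List.map_map]
      apply List.map_congr_left
      intro i h
      have := hi i (by simpa using h)
      have h8 := Nat.div_add_mod (β.getD i 0) m
      simp only [Function.comp]
      omega
    rw [h7, List.filter_map]
    congr 1
    apply List.filter_congr
    intro x _
    simp [hm.ne']
end
end
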